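/- arXiv:1006.5617 — 4 statements merged into one kernel-verified Lean document; each statement's English description precedes it below -/
import Mathlib

section
/- (Theorem 1, assertion 1, sufficiency for M^n) Suppose L(t) := M'(t) + M(t)Q(t) − Q(t)M(t) = 0 for all t ∈ ℝ. Let y : ℝ → ℝ^m be differentiable with y'(t) = Q(t)·y(t) for all t, and suppose y(t₀) = M(t₀)·c for some t₀ ∈ ℝ and c ∈ ℝ^m. Then y(t) = M(t)·y(t) for all t ∈ ℝ. -/
open Matrix

/-!
`L = 0`, that is `M' = QM - MQ`, makes `M y` a solution of `z' = Qz` whenever `y` is one. By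
uniqueness of solutions, `M y = y` therefore holds for all times once it holds at one time. At `t₀`
it holds because `Φ Φ⁺ = 1` makes `M = Φ⁺ Φ` idempotent and `y t₀` lies in its range.
-/

theorem isIdempotentElem_mul_of_mul_eq_one {R ι κ : Type*} [Semiring R] [Fintype ι] [Fintype κ]
    [DecidableEq κ] {A : Matrix κ ι R} {B : Matrix ι κ R} (h : A * B = 1) :
    IsIdempotentElem (B * A) := by
  rw [IsIdempotentElem, Matrix.mul_assoc, ← Matrix.mul_assoc A, h, Matrix.one_mul]

section MatrixToOperator

variable (𝕜 ι : Type*) [NontriviallyNormedField 𝕜] [CompleteSpace 𝕜] [Fintype ι] [DecidableEq ι]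

/-- Square matrices as continuous operators on `ι → 𝕜`, acting by `v ↦ A *ᵥ v`. It transports
entrywise statements about matrices to the operator-norm setting; being an algebra equivalence, it
respects commutators. -/
noncomputable def mulVecCLM : Matrix ι ι 𝕜 ≃ₐ[𝕜] ((ι → 𝕜) →L[𝕜] (ι → 𝕜)) :=
  toLinAlgEquiv'.trans (Module.End.toContinuousLinearMap (ι → 𝕜))

variable {𝕜 ι}

theorem mulVecCLM_apply (A : Matrix ι ι 𝕜) (v : ι → 𝕜) : mulVecCLM 𝕜 ι A v = A *ᵥ v := rfl

theorem continuous_mulVecCLM : Continuous (mulVecCLM 𝕜 ι) :=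
  (mulVecCLM 𝕜 ι).toLinearMap.continuous_of_finiteDimensional

open scoped Matrix.Norms.Elementwise in
theorem hasDerivAt_mulVecCLM {A : 𝕜 → Matrix ι ι 𝕜} {A' : Matrix ι ι 𝕜} {t : 𝕜}
    (hA : ∀ i j, HasDerivAt (fun s => A s i j) (A' i j) t) :
    HasDerivAt (fun s => mulVecCLM 𝕜 ι (A s)) (mulVecCLM 𝕜 ι A') t :=
  have hA_matrix : HasDerivAt A A' t :=
    hasDerivAt_pi.2 fun i => hasDerivAt_pi.2 fun j => hA i j
  (LinearMap.toContinuousLinearMap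
    (mulVecCLM 𝕜 ι).toLinearMap).hasFDerivAt.comp_hasDerivAt t hA_matrix

end MatrixToOperator

section LinearODE

variable {E : Type*} [NormedAddCommGroup E] [NormedSpace ℝ E]
  {Q P : ℝ → E →L[ℝ] E} {y z : ℝ → E} {t₀ : ℝ}

theorem linearODE_solution_unique (hQ : Continuous Q) (hy : ∀ t, HasDerivAt y (Q t (y t)) t)
    (hz : ∀ t, HasDerivAt z (Q t (z t)) t) (heq : y t₀ = z t₀) : y = z := by
  funext t
  obtain ⟨a, ha⟩ := exists_lt (min t t₀)
  obtain ⟨b, hb⟩ := exists_gt (max t t₀)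
  have ht : t ∈ Set.Ioo a b := ⟨(lt_min_iff.1 ha).1, (max_lt_iff.1 hb).1⟩
  have ht₀ : t₀ ∈ Set.Ioo a b := ⟨(lt_min_iff.1 ha).2, (max_lt_iff.1 hb).2⟩
  obtain ⟨K, hK⟩ := (isCompact_Icc (a := a) (b := b)).bddAbove_image hQ.nnnorm.continuousOn
  have hlip : ∀ s ∈ Set.Ioo a b, LipschitzOnWith K (Q s) Set.univ := fun s hs =>
    ((Q s).lipschitz.weaken
      (hK (Set.mem_image_of_mem _ (Set.Ioo_subset_Icc_self hs)))).lipschitzOnWith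
  exact ODE_solution_unique_of_mem_Ioo hlip ht₀ (fun s _ => ⟨hy s, Set.mem_univ _⟩)
    (fun s _ => ⟨hz s, Set.mem_univ _⟩) heq ht

theorem hasDerivAt_apply_of_hasDerivAt_commutator {t : ℝ}
    (hP : HasDerivAt P (Q t * P t - P t * Q t) t) (hy : HasDerivAt y (Q t (y t)) t) :
    HasDerivAt (fun s => P s (y s)) (Q t (P t (y t))) t := by
  simpa using hP.clm_apply hy

theorem invariance_of_Mn_of_L_eq_zero_general (hQ : Continuous Q)
    (hP : ∀ t, HasDerivAt P (Q t * P t - P t * Q t) t)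
    (hy : ∀ t, HasDerivAt y (Q t (y t)) t) (hinit : y t₀ = P t₀ (y t₀)) (t : ℝ) :
    y t = P t (y t) :=
  congrFun (linearODE_solution_unique hQ hy
    (fun s => hasDerivAt_apply_of_hasDerivAt_commutator (hP s) (hy s)) hinit) t

end LinearODE

theorem eq_mulVec_self_of_deriv_add_commutator_eq_zero {ι : Type*} [Fintype ι]
    {Q M M' : ℝ → Matrix ι ι ℝ} {y : ℝ → ι → ℝ} {t₀ : ℝ} (hQ : ∀ i j, Continuous fun t => Q t i j)
    (hM : ∀ t i j, HasDerivAt (fun s => M s i j) (M' t i j) t)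
    (hL : ∀ t, M' t + M t * Q t - Q t * M t = 0)
    (hy : ∀ t, HasDerivAt y (Q t *ᵥ y t) t) (hinit : y t₀ = M t₀ *ᵥ y t₀) (t : ℝ) :
    y t = M t *ᵥ y t := by
  classical
  let T := mulVecCLM ℝ ι
  have hTQ : Continuous fun t => T (Q t) := continuous_mulVecCLM.comp (continuous_matrix hQ)
  have hTM (t : ℝ) : HasDerivAt (fun s => T (M s)) (T (Q t) * T (M t) - T (M t) * T (Q t)) t := by
    rw [← map_mul, ← map_mul, ← map_sub, ← eq_sub_of_add_eq (sub_eq_zero.1 (hL t))]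
    exact hasDerivAt_mulVecCLM (hM t)
  simp only [← mulVecCLM_apply] at hy hinit ⊢
  exact invariance_of_Mn_of_L_eq_zero_general hTQ hTM hy hinit t

/-- Theorem 1, assertion 1, sufficiency for `Mⁿ`: if `L(t) = M'(t) + M(t)Q(t) - Q(t)M(t) = 0`
for all `t`, then any solution of `y' = Q(t)y` starting in `Mⁿ(t₀)` satisfies
`y(t) = M(t)y(t)` for all `t`. -/
theorem invariance_of_Mn_of_L_eq_zero (m n : ℕ) (hn : 1 ≤ n) (hnm : n < m)
    (Q : ℝ → Matrix (Fin m) (Fin m) ℝ)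
    (Φ : ℝ → Matrix (Fin n) (Fin m) ℝ) (Φp : ℝ → Matrix (Fin m) (Fin n) ℝ)
    (Φ' : ℝ → Matrix (Fin n) (Fin m) ℝ) (Φp' : ℝ → Matrix (Fin m) (Fin n) ℝ)
    (hQ : ∀ i j, Continuous fun t => Q t i j)
    (hΦ : ∀ t i j, HasDerivAt (fun s => Φ s i j) (Φ' t i j) t)
    (hΦc : ∀ i j, Continuous fun t => Φ' t i j)
    (hΦp : ∀ t i j, HasDerivAt (fun s => Φp s i j) (Φp' t i j) t)
    (hΦpc : ∀ i j, Continuous fun t => Φp' t i j)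
    (hpseudo : ∀ t, Φ t * Φp t = 1)
    (M M' : ℝ → Matrix (Fin m) (Fin m) ℝ)
    (hM : ∀ t, M t = Φp t * Φ t)
    (hM' : ∀ t i j, HasDerivAt (fun s => M s i j) (M' t i j) t)
    (hL : ∀ t, M' t + M t * Q t - Q t * M t = 0)
    (y : ℝ → Fin m → ℝ)
    (hy : ∀ t, HasDerivAt y (Q t *ᵥ y t) t)
    (t₀ : ℝ) (c : Fin m → ℝ) (hinit : y t₀ = M t₀ *ᵥ c) :
    ∀ t : ℝ, y t = M t *ᵥ y t := by
  have hM_idem : IsIdempotentElem (M t₀) :=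
    hM t₀ ▸ isIdempotentElem_mul_of_mul_eq_one (hpseudo t₀)
  have hinit_fixed : y t₀ = M t₀ *ᵥ y t₀ := by rw [hinit, mulVec_mulVec, hM_idem.eq]
  exact eq_mulVec_self_of_deriv_add_commutator_eq_zero hQ hM' hL hy hinit_fixed
end

section
/- (Theorem 1, assertion 2, necessity) Let Y : ℝ → M_m(ℝ) be differentiable with Y'(t) = Q(t)·Y(t) for all t and Y(0) = E (the fundamental matrix of solutions of y' = Q(t)y). If for all t ∈ ℝ one has M(t)·Y(t)·Φ⁺(0) = Y(t)·Φ⁺(0) (i.e., every solution starting in M^n(0) stays in M^n(t)), then L(t)·Y(t)·Φ⁺(0) = 0 for all t ∈ ℝ, where L(t) := M'(t) + M(t)Q(t) − Q(t)M(t). -/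
open Matrix

section EntrywiseDerivative

open Filter Topology

variable {𝕜 𝔸 l m n : Type*} [NontriviallyNormedField 𝕜] [NormedRing 𝔸] [NormedAlgebra 𝕜 𝔸]
  [Fintype m] {t : 𝕜}

theorem hasDerivAt_matrix_mul_apply {A : 𝕜 → Matrix l m 𝔸} {B : 𝕜 → Matrix m n 𝔸}
    {A' : Matrix l m 𝔸} {B' : Matrix m n 𝔸}
    (hA : ∀ i j, HasDerivAt (fun s => A s i j) (A' i j) t)
    (hB : ∀ i j, HasDerivAt (fun s => B s i j) (B' i j) t) (i : l) (j : n) :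
    HasDerivAt (fun s => (A s * B s) i j) ((A' * B t + A t * B') i j) t := by
  simp only [Matrix.add_apply, Matrix.mul_apply, ← Finset.sum_add_distrib]
  exact HasDerivAt.fun_sum fun k _ => (hA i k).mul (hB k j)

theorem hasDerivAt_matrix_mul_const_apply {A : 𝕜 → Matrix l m 𝔸} {A' : Matrix l m 𝔸}
    (hA : ∀ i j, HasDerivAt (fun s => A s i j) (A' i j) t) (C : Matrix m n 𝔸) (i : l) (j : n) :
    HasDerivAt (fun s => (A s * C) i j) ((A' * C) i j) t := by
  simp only [Matrix.mul_apply]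
  exact HasDerivAt.fun_sum fun k _ => (hA i k).mul_const (C k j)

theorem deriv_mul_add_mul_deriv_eq_of_eventually_mul_eq {M : 𝕜 → Matrix m m 𝔸}
    {Z : 𝕜 → Matrix m n 𝔸} {M' : Matrix m m 𝔸} {Z' : Matrix m n 𝔸}
    (hM : ∀ i j, HasDerivAt (fun s => M s i j) (M' i j) t)
    (hZ : ∀ i j, HasDerivAt (fun s => Z s i j) (Z' i j) t)
    (hMZ : ∀ᶠ s in 𝓝 t, M s * Z s = Z s) :
    M' * Z t + M t * Z' = Z' := by
  ext i j
  have hMZ_entry : (fun s => Z s i j) =ᶠ[𝓝 t] fun s => (M s * Z s) i j :=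
    hMZ.mono fun s hs => (congrFun₂ hs i j).symm
  exact ((hasDerivAt_matrix_mul_apply hM hZ i j).congr_of_eventuallyEq hMZ_entry).unique (hZ i j)

theorem L_annihilates_YPhi_of_invariant_general {M : 𝕜 → Matrix m m 𝔸}
    {Z : 𝕜 → Matrix m n 𝔸} {M' Q : Matrix m m 𝔸}
    (hM : ∀ i j, HasDerivAt (fun s => M s i j) (M' i j) t)
    (hZ : ∀ i j, HasDerivAt (fun s => Z s i j) ((Q * Z t) i j) t)
    (hMZ : ∀ᶠ s in 𝓝 t, M s * Z s = Z s) :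
    (M' + M t * Q - Q * M t) * Z t = 0 := by
  calc (M' + M t * Q - Q * M t) * Z t
      = M' * Z t + M t * (Q * Z t) - Q * (M t * Z t) := by
        simp only [Matrix.sub_mul, Matrix.add_mul, Matrix.mul_assoc]
    _ = Q * Z t - Q * Z t := by
        rw [deriv_mul_add_mul_deriv_eq_of_eventually_mul_eq hM hZ hMZ, hMZ.self_of_nhds]
    _ = 0 := sub_self _

end EntrywiseDerivative

/-- Theorem 1, assertion 2, necessity: if every solution of `y' = Q(t)y` starting in
`Mⁿ(0)` stays in `Mⁿ(t)` (expressed via the fundamental matrix `Y`), then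
`L(t)·Y(t)·Φ⁺(0) = 0` for all `t`, where `L(t) = M'(t) + M(t)Q(t) - Q(t)M(t)`. -/
theorem L_annihilates_YPhi_of_invariant (m n : ℕ) (hn : 1 ≤ n) (hnm : n < m)
    (Q : ℝ → Matrix (Fin m) (Fin m) ℝ)
    (Φ : ℝ → Matrix (Fin n) (Fin m) ℝ) (Φp : ℝ → Matrix (Fin m) (Fin n) ℝ)
    (Φ' : ℝ → Matrix (Fin n) (Fin m) ℝ) (Φp' : ℝ → Matrix (Fin m) (Fin n) ℝ)
    (hQ : ∀ i j, Continuous fun t => Q t i j)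
    (hΦ : ∀ t i j, HasDerivAt (fun s => Φ s i j) (Φ' t i j) t)
    (hΦc : ∀ i j, Continuous fun t => Φ' t i j)
    (hΦp : ∀ t i j, HasDerivAt (fun s => Φp s i j) (Φp' t i j) t)
    (hΦpc : ∀ i j, Continuous fun t => Φp' t i j)
    (hpseudo : ∀ t, Φ t * Φp t = 1)
    (M M' : ℝ → Matrix (Fin m) (Fin m) ℝ)
    (hM : ∀ t, M t = Φp t * Φ t)
    (hM' : ∀ t i j, HasDerivAt (fun s => M s i j) (M' t i j) t)
    (Y : ℝ → Matrix (Fin m) (Fin m) ℝ)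
    (hY : ∀ t i j, HasDerivAt (fun s => Y s i j) ((Q t * Y t) i j) t)
    (hY0 : Y 0 = 1)
    (hinv : ∀ t, M t * Y t * Φp 0 = Y t * Φp 0) :
    ∀ t : ℝ, (M' t + M t * Q t - Q t * M t) * (Y t * Φp 0) = 0 := by
  exact fun t => L_annihilates_YPhi_of_invariant_general (Z := fun s => Y s * Φp 0) (hM' t)
    (by simpa only [Matrix.mul_assoc] using hasDerivAt_matrix_mul_const_apply (hY t) (Φp 0))
    (.of_forall fun s => by rw [← Matrix.mul_assoc, hinv s])
end

section
/- (Theorem 1, assertion 3) Let Y : ℝ → M_m(ℝ) be differentiable with Y'(t) = Q(t)·Y(t) for all t and Y(0) = E. If for all t ∈ ℝ and all c ∈ ℝ^m one has M(t)·Y(t)·(E − M(0))·c = 0 (i.e., the subspace M^{m−n}(t) = {y : M(t)·y = 0} is an invariant manifold of y' = Q(t)y), then L(t)·Y(t)·(E − M(0))·c = 0 for all t ∈ ℝ and c ∈ ℝ^m, where L(t) := M'(t) + M(t)Q(t) − Q(t)M(t); that is, M^{m−n}(t) ⊆ ker L(t) for all t ∈ ℝ. -/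
open Matrix

section

open scoped Topology

variable {𝕜 𝔸 ι κ : Type*} [NontriviallyNormedField 𝕜] [NormedRing 𝔸] [NormedAlgebra 𝕜 𝔸]
  [Fintype ι] {t : 𝕜}

theorem hasDerivAt_dotProduct {u v : 𝕜 → ι → 𝔸} {u' v' : ι → 𝔸} (hu : HasDerivAt u u' t)
    (hv : HasDerivAt v v' t) :
    HasDerivAt (fun s => u s ⬝ᵥ v s) (u' ⬝ᵥ v t + u t ⬝ᵥ v') t := by
  simp only [dotProduct, ← Finset.sum_add_distrib]
  exact HasDerivAt.fun_sum fun j _ => (hasDerivAt_pi.1 hu j).mul (hasDerivAt_pi.1 hv j)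

theorem hasDerivAt_mulVec {A : 𝕜 → Matrix κ ι 𝔸} {A' : Matrix κ ι 𝔸} {y : 𝕜 → ι → 𝔸} {y' : ι → 𝔸}
    (hA : ∀ i j, HasDerivAt (fun s => A s i j) (A' i j) t) (hy : HasDerivAt y y' t) :
    HasDerivAt (fun s => A s *ᵥ y s) (A' *ᵥ y t + A t *ᵥ y') t :=
  hasDerivAt_pi.2 fun i => hasDerivAt_dotProduct (hasDerivAt_pi.2 (hA i)) hy

theorem hasDerivAt_mulVec_const {A : 𝕜 → Matrix κ ι 𝔸} {A' : Matrix κ ι 𝔸}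
    (hA : ∀ i j, HasDerivAt (fun s => A s i j) (A' i j) t) (v : ι → 𝔸) :
    HasDerivAt (fun s => A s *ᵥ v) (A' *ᵥ v) t := by
  simpa only [mulVec_zero, add_zero] using hasDerivAt_mulVec hA (hasDerivAt_const t v)

theorem hasDerivAt_mulVec_of_hasDerivAt_mul [Fintype κ] {Y : 𝕜 → Matrix κ ι 𝔸}
    {Q : Matrix κ κ 𝔸} (hY : ∀ i j, HasDerivAt (fun s => Y s i j) ((Q * Y t) i j) t) (v : ι → 𝔸) :
    HasDerivAt (fun s => Y s *ᵥ v) (Q *ᵥ (Y t *ᵥ v)) t :=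
  mulVec_mulVec v Q (Y t) ▸ hasDerivAt_mulVec_const hY v

theorem mulVec_add_mulVec_eq_zero_of_hasDerivAt {A : 𝕜 → Matrix κ ι 𝔸} {A' : Matrix κ ι 𝔸}
    {y : 𝕜 → ι → 𝔸} {y' : ι → 𝔸} (hA : ∀ i j, HasDerivAt (fun s => A s i j) (A' i j) t)
    (hy : HasDerivAt y y' t) (hAy : ∀ᶠ s in 𝓝 t, A s *ᵥ y s = 0) :
    A' *ᵥ y t + A t *ᵥ y' = 0 := by
  funext i
  have hderiv : HasDerivAt (fun s => (A s *ᵥ y s) i) ((A' *ᵥ y t + A t *ᵥ y') i) t :=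
    hasDerivAt_pi (E' := fun _ => 𝔸).1 (hasDerivAt_mulVec hA hy) i
  have hzero : (fun s => (A s *ᵥ y s) i) =ᶠ[𝓝 t] fun _ => 0 := hAy.mono fun _ hs => congrFun hs i
  exact hderiv.unique ((hasDerivAt_const t (0 : 𝔸)).congr_of_eventuallyEq hzero)

theorem ker_L_contains_Mmn_of_invariant_general {M : 𝕜 → Matrix ι ι 𝔸} {M' Q : Matrix ι ι 𝔸}
    {y : 𝕜 → ι → 𝔸} (hM : ∀ i j, HasDerivAt (fun s => M s i j) (M' i j) t)
    (hy : HasDerivAt y (Q *ᵥ y t) t) (hMy : ∀ᶠ s in 𝓝 t, M s *ᵥ y s = 0) :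
    (M' + M t * Q - Q * M t) *ᵥ y t = 0 := calc
  _ = M' *ᵥ y t + M t *ᵥ (Q *ᵥ y t) - Q *ᵥ (M t *ᵥ y t) := by
    simp only [sub_mulVec, add_mulVec, mulVec_mulVec]
  _ = M' *ᵥ y t + M t *ᵥ (Q *ᵥ y t) := by rw [hMy.self_of_nhds, mulVec_zero, sub_zero]
  _ = 0 := mulVec_add_mulVec_eq_zero_of_hasDerivAt hM hy hMy

end

/-- Theorem 1, assertion 3: if the subspace `M^{m-n}(t) = {y : M(t)y = 0}` is an invariant
manifold of `y' = Q(t)y` (expressed via the fundamental matrix `Y`), then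
`M^{m-n}(t) ⊆ ker L(t)` for all `t`, where `L(t) = M'(t) + M(t)Q(t) - Q(t)M(t)`. -/
theorem ker_L_contains_Mmn_of_invariant (m n : ℕ) (hn : 1 ≤ n) (hnm : n < m)
    (Q : ℝ → Matrix (Fin m) (Fin m) ℝ)
    (Φ : ℝ → Matrix (Fin n) (Fin m) ℝ) (Φp : ℝ → Matrix (Fin m) (Fin n) ℝ)
    (Φ' : ℝ → Matrix (Fin n) (Fin m) ℝ) (Φp' : ℝ → Matrix (Fin m) (Fin n) ℝ)
    (hQ : ∀ i j, Continuous fun t => Q t i j)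
    (hΦ : ∀ t i j, HasDerivAt (fun s => Φ s i j) (Φ' t i j) t)
    (hΦc : ∀ i j, Continuous fun t => Φ' t i j)
    (hΦp : ∀ t i j, HasDerivAt (fun s => Φp s i j) (Φp' t i j) t)
    (hΦpc : ∀ i j, Continuous fun t => Φp' t i j)
    (hpseudo : ∀ t, Φ t * Φp t = 1)
    (M M' : ℝ → Matrix (Fin m) (Fin m) ℝ)
    (hM : ∀ t, M t = Φp t * Φ t)
    (hM' : ∀ t i j, HasDerivAt (fun s => M s i j) (M' t i j) t)
    (Y : ℝ → Matrix (Fin m) (Fin m) ℝ)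
    (hY : ∀ t i j, HasDerivAt (fun s => Y s i j) ((Q t * Y t) i j) t)
    (hY0 : Y 0 = 1)
    (hinv : ∀ (t : ℝ) (c : Fin m → ℝ), M t *ᵥ (Y t *ᵥ ((1 - M 0) *ᵥ c)) = 0) :
    ∀ (t : ℝ) (c : Fin m → ℝ),
      (M' t + M t * Q t - Q t * M t) *ᵥ (Y t *ᵥ ((1 - M 0) *ᵥ c)) = 0 :=
  fun t c => ker_L_contains_Mmn_of_invariant_general (hM' t)
    (hasDerivAt_mulVec_of_hasDerivAt_mul (hY t) _) (.of_forall fun s => hinv s c)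
end

section
/- (Theorem 1, assertion 1, necessity) Let Y : ℝ → M_m(ℝ) be differentiable with Y'(t) = Q(t)·Y(t) for all t, Y(0) = E, and Y(t) invertible for all t. Suppose that for all t ∈ ℝ both M(t)·Y(t)·M(0) = Y(t)·M(0) and M(t)·Y(t)·(E − M(0)) = 0 hold (i.e., the subspaces M^n(t) = {y : M(t)·y = y} and M^{m−n}(t) = {y : M(t)·y = 0}, taken together, are invariant manifolds of y' = Q(t)y). Then L(t) := M'(t) + M(t)Q(t) − Q(t)M(t) = 0 for all t ∈ ℝ. -/
open Matrix

open scoped Topology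

theorem mul_eq_mul_of_invariant {R : Type*} [NonAssocRing R] {a y p : R}
    (hrange : a * y * p = y * p) (hker : a * y * (1 - p) = 0) : a * y = y * p := by
  calc a * y = a * y * p + a * y * (1 - p) := by rw [← mul_add, add_sub_cancel, mul_one]
    _ = y * p := by rw [hrange, hker, add_zero]

theorem hasDerivAt_matrix {𝕜 F m n : Type*} [NontriviallyNormedField 𝕜] [NormedAddCommGroup F]
    [NormedSpace 𝕜 F] [Finite n] {X : 𝕜 → Matrix m n F} {X' : Matrix m n F} {t : 𝕜} :
    HasDerivAt X X' t ↔ ∀ i j, HasDerivAt (fun s => X s i j) (X' i j) t := by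
  have := Fintype.ofFinite n
  exact hasDerivAt_pi.trans (forall_congr' fun _ => hasDerivAt_pi)

section NormedAlgebra

variable {𝕜 A : Type*} [NontriviallyNormedField 𝕜] [NormedRing A] [NormedAlgebra 𝕜 A]
  {M Y : 𝕜 → A} {M' Q P : A} {t : 𝕜}

theorem L_eq_zero_of_intertwining (hM : HasDerivAt M M' t) (hY : HasDerivAt Y (Q * Y t) t)
    (hYinv : IsUnit (Y t)) (hMY : ∀ᶠ s in 𝓝 t, M s * Y s = Y s * P) :
    M' + M t * Q - Q * M t = 0 := by
  have hderiv : M' * Y t + M t * (Q * Y t) = Q * Y t * P :=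
    (hM.mul hY).unique ((hY.mul_const P).congr_of_eventuallyEq hMY)
  apply hYinv.mul_right_cancel
  calc (M' + M t * Q - Q * M t) * Y t
      = M' * Y t + M t * (Q * Y t) - Q * (M t * Y t) := by noncomm_ring
    _ = Q * Y t * P - Q * (Y t * P) := by rw [hderiv, hMY.self_of_nhds]
    _ = 0 * Y t := by rw [mul_assoc, sub_self, zero_mul]

theorem L_eq_zero_of_both_invariant_general (hM : HasDerivAt M M' t)
    (hY : HasDerivAt Y (Q * Y t) t) (hYinv : IsUnit (Y t))
    (hrange : ∀ᶠ s in 𝓝 t, M s * Y s * P = Y s * P)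
    (hker : ∀ᶠ s in 𝓝 t, M s * Y s * (1 - P) = 0) :
    M' + M t * Q - Q * M t = 0 :=
  L_eq_zero_of_intertwining hM hY hYinv (hrange.mp (hker.mono fun _ hk hr =>
    mul_eq_mul_of_invariant hr hk))

end NormedAlgebra

/-- Theorem 1, assertion 1, necessity: if the subspaces `Mⁿ(t)` and `M^{m-n}(t)`, taken
together, are invariant manifolds of `y' = Q(t)y` (expressed via the fundamental matrix
`Y`), then `L(t) = M'(t) + M(t)Q(t) - Q(t)M(t) = 0` for all `t`. -/
theorem L_eq_zero_of_both_invariant (m n : ℕ) (hn : 1 ≤ n) (hnm : n < m)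
    (Q : ℝ → Matrix (Fin m) (Fin m) ℝ)
    (Φ : ℝ → Matrix (Fin n) (Fin m) ℝ) (Φp : ℝ → Matrix (Fin m) (Fin n) ℝ)
    (Φ' : ℝ → Matrix (Fin n) (Fin m) ℝ) (Φp' : ℝ → Matrix (Fin m) (Fin n) ℝ)
    (hQ : ∀ i j, Continuous fun t => Q t i j)
    (hΦ : ∀ t i j, HasDerivAt (fun s => Φ s i j) (Φ' t i j) t)
    (hΦc : ∀ i j, Continuous fun t => Φ' t i j)
    (hΦp : ∀ t i j, HasDerivAt (fun s => Φp s i j) (Φp' t i j) t)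
    (hΦpc : ∀ i j, Continuous fun t => Φp' t i j)
    (hpseudo : ∀ t, Φ t * Φp t = 1)
    (M M' : ℝ → Matrix (Fin m) (Fin m) ℝ)
    (hM : ∀ t, M t = Φp t * Φ t)
    (hM' : ∀ t i j, HasDerivAt (fun s => M s i j) (M' t i j) t)
    (Y : ℝ → Matrix (Fin m) (Fin m) ℝ)
    (hY : ∀ t i j, HasDerivAt (fun s => Y s i j) ((Q t * Y t) i j) t)
    (hY0 : Y 0 = 1)
    (hYinv : ∀ t, IsUnit (Y t))
    (hinv1 : ∀ t, M t * Y t * M 0 = Y t * M 0)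
    (hinv2 : ∀ t, M t * Y t * (1 - M 0) = 0) :
    ∀ t : ℝ, M' t + M t * Q t - Q t * M t = 0 := by
  -- The product rule needs a normed ring, and this norm induces the entrywise topology.
  open scoped Matrix.Norms.Operator in
  exact fun t => L_eq_zero_of_both_invariant_general (hasDerivAt_matrix.2 (hM' t))
    (hasDerivAt_matrix.2 (hY t)) (hYinv t) (.of_forall hinv1) (.of_forall hinv2)
end
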